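/- arXiv:1909.10944 — 4 statements merged into one kernel-verified Lean document; each statement's English description precedes it below -/
import Mathlib

section
/- Let γ ∈ ℝ with γ ≠ 0, η > 0, and C₁, C₂ ∈ ℝ. Then the function p(x,t) := (C₂ − C₁·t + (C₁/γ)·log x)·exp(−γ·x/η) solves the Feller equation: for every x > 0 and every t ∈ ℝ, ∂ₜp(x,t) = ∂ₓ( x·(γ·p(x,t) + η·∂ₓp(x,t)) ). (This is the general solution invariant under the symmetry generator ξ₃.) -/
/-- The solutions of the Feller equation invariant under the symmetry generator ξ₃:
`p(x,t) = (C₂ − C₁·t + (C₁/γ)·log x)·exp(−γ·x/η)` satisfies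
`∂ₜp = ∂ₓ( x·(γ·p + η·∂ₓp) )` for all `x > 0`, `t ∈ ℝ`. -/
theorem feller_xi3_invariant_solution (γ η : ℝ) (hγ : γ ≠ 0) (hη : 0 < η)
    (C₁ C₂ : ℝ) (p : ℝ → ℝ → ℝ)
    (hp : ∀ x t, p x t =
      (C₂ - C₁ * t + (C₁ / γ) * Real.log x) * Real.exp (-(γ * x / η))) :
    ∀ x > 0, ∀ t : ℝ,
      deriv (fun τ => p x τ) t =
        deriv (fun y => y * (γ * p y t + η * deriv (fun z => p z t) y)) x := by
  intro x hx t
  have hη' : η ≠ 0 := hη.ne'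
  have hE : ∀ y : ℝ, HasDerivAt (fun z : ℝ => Real.exp (-(γ * z / η)))
      (Real.exp (-(γ * y / η)) * (-(γ * 1 / η))) y := fun y =>
    ((((hasDerivAt_id y).const_mul γ).div_const η).neg).exp
  have hpx : ∀ y : ℝ, 0 < y → deriv (fun z => p z t) y =
      (C₁ / γ * y⁻¹) * Real.exp (-(γ * y / η)) +
      (C₂ - C₁ * t + (C₁ / γ) * Real.log y) *
        (Real.exp (-(γ * y / η)) * (-(γ * 1 / η))) := by
    intro y hy
    simp only [hp]
    exact ((((Real.hasDerivAt_log hy.ne').const_mul (C₁ / γ)).const_add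
      (C₂ - C₁ * t)).mul (hE y)).deriv
  have hev : (fun y => y * (γ * p y t + η * deriv (fun z => p z t) y)) =ᶠ[nhds x]
      (fun y => (η * C₁ / γ) * Real.exp (-(γ * y / η))) := by
    filter_upwards [lt_mem_nhds hx] with y hy
    have hy' : y ≠ 0 := ne_of_gt hy
    rw [hpx y hy, hp]
    field_simp
    ring
  rw [hev.deriv_eq, ((hE x).const_mul (η * C₁ / γ)).deriv]
  simp only [hp]
  have ht : HasDerivAt (fun τ : ℝ =>
      (C₂ - C₁ * τ + (C₁ / γ) * Real.log x) * Real.exp (-(γ * x / η)))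
      (-(C₁ * 1) * Real.exp (-(γ * x / η))) t :=
    (((((hasDerivAt_id t).const_mul C₁).const_sub C₂).add_const _).mul_const _)
  rw [ht.deriv]
  field_simp
end

section
/- Let γ ∈ ℝ with γ ≠ 0, η > 0, and C₁, C₂ ∈ ℝ. Then the function p(x,t) := (C₁ + C₂·t + (C₂/γ)·log x)·exp(γ·t) solves the Feller equation: for every x > 0 and every t ∈ ℝ, ∂ₜp(x,t) = ∂ₓ( x·(γ·p(x,t) + η·∂ₓp(x,t)) ). (This is the general solution invariant under the symmetry generator ξ₄.) -/
/-- The solutions of the Feller equation invariant under the symmetry generator ξ₄: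
`p(x,t) = (C₁ + C₂·t + (C₂/γ)·log x)·exp(γ·t)` satisfies
`∂ₜp = ∂ₓ( x·(γ·p + η·∂ₓp) )` for all `x > 0`, `t ∈ ℝ`. -/
theorem feller_xi4_invariant_solution (γ η : ℝ) (hγ : γ ≠ 0) (hη : 0 < η)
    (C₁ C₂ : ℝ) (p : ℝ → ℝ → ℝ)
    (hp : ∀ x t, p x t =
      (C₁ + C₂ * t + (C₂ / γ) * Real.log x) * Real.exp (γ * t)) :
    ∀ x > 0, ∀ t : ℝ,
      deriv (fun τ => p x τ) t =
        deriv (fun y => y * (γ * p y t + η * deriv (fun z => p z t) y)) x := by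
  intro x hx t
  have hz : ∀ y : ℝ, 0 < y → HasDerivAt (fun z => p z t)
      ((C₂ / γ) * y⁻¹ * Real.exp (γ * t)) y := by
    intro y hy
    simp only [hp]
    exact (((Real.hasDerivAt_log hy.ne').const_mul (C₂ / γ)).const_add
      (C₁ + C₂ * t)).mul_const _
  have h1 : HasDerivAt (fun τ => p x τ)
      ((C₂ * 1) * Real.exp (γ * t) + (C₁ + C₂ * t + (C₂ / γ) * Real.log x) *
        (Real.exp (γ * t) * (γ * 1))) t := by
    simp only [hp]
    exact ((((hasDerivAt_id t).const_mul C₂).const_add C₁).add_const _).mul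
      (((hasDerivAt_id t).const_mul γ).exp)
  have h2 : HasDerivAt (fun y => y * (γ * p y t) + η * (C₂ / γ) * Real.exp (γ * t))
      (1 * (γ * p x t) + x * (γ * ((C₂ / γ) * x⁻¹ * Real.exp (γ * t)))) x :=
    ((hasDerivAt_id x).mul ((hz x hx).const_mul γ)).add_const _
  have h3 : (fun y => y * (γ * p y t + η * deriv (fun z => p z t) y)) =ᶠ[nhds x]
      (fun y => y * (γ * p y t) + η * (C₂ / γ) * Real.exp (γ * t)) := by
    filter_upwards [lt_mem_nhds hx] with y hy
    rw [(hz y hy).deriv]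
    have := hy.ne'
    field_simp
  rw [h3.deriv_eq, h1.deriv, h2.deriv, hp]
  have := hx.ne'
  field_simp
  ring
end

section
/- Let γ ∈ ℝ, η > 0, and let g : (0,∞) → ℝ be differentiable with g'(x) = −exp(γ·x/η)/x for every x > 0. Let p : ℝ → ℝ → ℝ be twice differentiable in x and differentiable in t, solving the Feller equation ∂ₜp(x,t) = ∂ₓ( x·(γ·p(x,t) + η·∂ₓp(x,t)) ) for all x > 0 and t ∈ ℝ. Define 𝔊(x,t) := −η·exp(γ·x/η)·p(x,t) − x·( γ·g(x)·p(x,t) + η·g(x)·∂ₓp(x,t) ). Then the conservation law ∂ₜ( g(x)·p(x,t) ) + ∂ₓ𝔊(x,t) = 0 holds for all x > 0 and t ∈ ℝ. -/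
/-- Conservation law of the Feller equation with the exponential-integral
multiplier: if `p` solves `∂ₜp = ∂ₓ( x·(γ·p + η·∂ₓp) )` for `x > 0` and `g`
is an antiderivative realizing `x ↦ E₁(−γx/η)` (i.e. `g'(x) = −exp(γx/η)/x`),
then `∂ₜ(g(x)·p(x,t)) + ∂ₓ𝔊(x,t) = 0` with
`𝔊 = −η·e^{γx/η}·p − x·(γ·g·p + η·g·∂ₓp)`. -/
theorem feller_conservation_law (γ η : ℝ) (hη : 0 < η)
    (g : ℝ → ℝ) (hg : ∀ x > 0, HasDerivAt g (-(Real.exp (γ * x / η)) / x) x)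
    (p : ℝ → ℝ → ℝ)
    (hdx : ∀ x > 0, ∀ t : ℝ, DifferentiableAt ℝ (fun y => p y t) x)
    (hdxx : ∀ x > 0, ∀ t : ℝ, DifferentiableAt ℝ (deriv fun y => p y t) x)
    (hdt : ∀ x > 0, ∀ t : ℝ, DifferentiableAt ℝ (fun τ => p x τ) t)
    (heq : ∀ x > 0, ∀ t : ℝ,
      deriv (fun τ => p x τ) t =
        deriv (fun y => y * (γ * p y t + η * deriv (fun z => p z t) y)) x)
    (G : ℝ → ℝ → ℝ)
    (hG : ∀ x t, G x t =
      -(η * Real.exp (γ * x / η) * p x t) -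
        x * (γ * g x * p x t + η * g x * deriv (fun y => p y t) x)) :
    ∀ x > 0, ∀ t : ℝ,
      deriv (fun τ => g x * p x τ) t + deriv (fun y => G y t) x = 0 := by
  intro x hx t
  have hp := (hdx x hx t).hasDerivAt
  have hF : DifferentiableAt ℝ
      (fun y => y * (γ * p y t + η * deriv (fun z => p z t) y)) x :=
    differentiableAt_id.mul
      (((hdx x hx t).const_mul γ).add ((hdxx x hx t).const_mul η))
  have hF' := hF.hasDerivAt
  rw [← heq x hx t] at hF'
  have he : HasDerivAt (fun y : ℝ => Real.exp (γ * y / η))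
      (Real.exp (γ * x / η) * (γ * 1 / η)) x :=
    (((hasDerivAt_id x).const_mul γ).div_const η).exp
  have hGd := (((he.const_mul η).mul hp).neg).sub ((hg x hx).mul hF')
  have hfun : (fun y => G y t) = fun y =>
      -(η * Real.exp (γ * y / η) * p y t) -
        g y * (y * (γ * p y t + η * deriv (fun z => p z t) y)) := by
    funext y
    rw [hG]
    ring
  have h1 := (congrArg (fun f => deriv f x) hfun).trans hGd.deriv
  beta_reduce at h1
  rw [h1, ((hdt x hx t).hasDerivAt.const_mul (g x)).deriv]
  have hx' : x ≠ 0 := hx.ne'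
  have hη' : η ≠ 0 := hη.ne'
  generalize Real.exp (γ * x / η) = e
  field_simp
  ring
end

section
/- Let γ ∈ ℝ, η > 0 and let I ⊆ ℝ be an open interval. Let P : ℝ → ℝ → ℝ be twice continuously differentiable on (0,∞) × I with ∂ₓP(x,t) > 0 there, and suppose P satisfies ∂ₜP(x,t) = x·( γ·∂ₓP(x,t) + η·∂ₓₓP(x,t) ) for all x > 0, t ∈ I. Let 𝒳 : J × I → (0,∞) (J an open interval of mass values) be differentiable, twice differentiable in its first variable s, and satisfy the inverse relation P(𝒳(s,t), t) = s for all (s,t) ∈ J × I. Then 𝒳 satisfies the Lagrangian equation: for all (s,t) ∈ J × I, ∂ₜ( exp(γ·t)·𝒳(s,t) ) + 𝒳(s,t) · ∂ₛ( η·exp(γ·t) / ∂ₛ𝒳(s,t) ) = 0. -/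
open Set

/-- Lagrangian (material) reformulation of the Feller equation: if `P` satisfies the
integrated equation `∂ₜP = x·(γ·∂ₓP + η·∂ₓₓP)` on `(0,∞) × I` with `∂ₓP > 0`, and
`𝒳 : J × I → (0,∞)` is its pseudo-inverse in the first variable
(`P(𝒳(s,t), t) = s`), then `𝒳` satisfies
`∂ₜ( e^{γt}·𝒳 ) + 𝒳·∂ₛ( η·e^{γt}/∂ₛ𝒳 ) = 0` on `J × I`. -/
theorem feller_lagrangian_equation (γ η : ℝ) (hη : 0 < η)
    (I J : Set ℝ) (hI : IsOpen I) (hI' : I.OrdConnected)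
    (hJ : IsOpen J) (hJ' : J.OrdConnected)
    (P : ℝ → ℝ → ℝ)
    (hreg : ContDiffOn ℝ 2 (fun q : ℝ × ℝ => P q.1 q.2) (Ioi 0 ×ˢ I))
    (hPx_pos : ∀ x > 0, ∀ t ∈ I, 0 < deriv (fun y => P y t) x)
    (hPeq : ∀ x > 0, ∀ t ∈ I,
      deriv (fun τ => P x τ) t =
        x * (γ * deriv (fun y => P y t) x
              + η * deriv (deriv fun y => P y t) x))
    (X : ℝ → ℝ → ℝ)
    (hXpos : ∀ s ∈ J, ∀ t ∈ I, 0 < X s t)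
    (hXdt : ∀ s ∈ J, ∀ t ∈ I, DifferentiableAt ℝ (fun τ => X s τ) t)
    (hXds : ∀ s ∈ J, ∀ t ∈ I, DifferentiableAt ℝ (fun σ => X σ t) s)
    (hXdss : ∀ s ∈ J, ∀ t ∈ I, DifferentiableAt ℝ (deriv fun σ => X σ t) s)
    (hinv : ∀ s ∈ J, ∀ t ∈ I, P (X s t) t = s) :
    ∀ s ∈ J, ∀ t ∈ I,
      deriv (fun τ => Real.exp (γ * τ) * X s τ) t +
        X s t *
          deriv (fun σ => η * Real.exp (γ * t) / deriv (fun σ' => X σ' t) σ) s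
      = 0 := by
  intro s hs t ht
  have hx : 0 < X s t := hXpos s hs t ht
  -- slice regularity
  have hslice : ContDiffOn ℝ 2 (fun y => P y t) (Ioi 0) := by
    have h1 : ContDiffOn ℝ 2 (fun y : ℝ => (y, t)) (Ioi 0) :=
      (contDiff_id.prodMk contDiff_const).contDiffOn
    exact hreg.comp h1 (fun y hy => ⟨hy, ht⟩)
  have hd1 : ∀ x > 0, DifferentiableAt ℝ (fun y => P y t) x := fun x hx =>
    (hslice.differentiableOn (by norm_num)).differentiableAt (Ioi_mem_nhds hx)
  have hd2 : DifferentiableAt ℝ (deriv fun y => P y t) (X s t) := by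
    have h : ContDiffOn ℝ 1 (deriv fun y => P y t) (Ioi 0) :=
      hslice.deriv_of_isOpen isOpen_Ioi (by norm_num)
    exact (h.differentiableOn (by norm_num)).differentiableAt (Ioi_mem_nhds hx)
  -- spatial chain rule
  have hS : ∀ σ ∈ J, deriv (fun y => P y t) (X σ t) * deriv (fun σ' => X σ' t) σ = 1 := by
    intro σ hσ
    have h1 : HasDerivAt (fun σ' => P (X σ' t) t)
        (deriv (fun y => P y t) (X σ t) * deriv (fun σ' => X σ' t) σ) σ :=
      HasDerivAt.comp (h₂ := fun y => P y t) σ (hd1 _ (hXpos σ hσ t ht)).hasDerivAt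
        (hXds σ hσ t ht).hasDerivAt
    have h2 : HasDerivAt (fun σ' => P (X σ' t) t) 1 σ := by
      refine (hasDerivAt_id σ).congr_of_eventuallyEq ?_
      filter_upwards [hJ.mem_nhds hσ] with a ha
      exact hinv a ha t ht
    exact h1.unique h2
  -- time chain rule
  have hT : deriv (fun y => P y t) (X s t) * deriv (fun τ => X s τ) t
      + deriv (fun τ => P (X s t) τ) t = 0 := by
    have hF : HasFDerivAt (fun q : ℝ × ℝ => P q.1 q.2)
        (fderiv ℝ (fun q : ℝ × ℝ => P q.1 q.2) (X s t, t)) (X s t, t) :=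
      ((hreg.differentiableOn (by norm_num)).differentiableAt
        ((isOpen_Ioi.prod hI).mem_nhds (Set.mk_mem_prod (Set.mem_Ioi.2 hx) ht))).hasFDerivAt
    set L := fderiv ℝ (fun q : ℝ × ℝ => P q.1 q.2) (X s t, t)
    have e1 : HasDerivAt (fun y => P y t) (L (1, 0)) (X s t) :=
      hF.comp_hasDerivAt (f := fun y : ℝ => (y, t)) (X s t)
        ((hasDerivAt_id _).prodMk (hasDerivAt_const _ _))
    have e2 : HasDerivAt (fun τ => P (X s t) τ) (L (0, 1)) t :=
      hF.comp_hasDerivAt (f := fun τ : ℝ => (X s t, τ)) t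
        ((hasDerivAt_const _ _).prodMk (hasDerivAt_id _))
    have e3 : HasDerivAt (fun τ => P (X s τ) τ) (L (deriv (fun τ => X s τ) t, 1)) t :=
      hF.comp_hasDerivAt (f := fun τ : ℝ => (X s τ, τ)) t
        ((hXdt s hs t ht).hasDerivAt.prodMk (hasDerivAt_id _))
    have e4 : HasDerivAt (fun τ => P (X s τ) τ) 0 t := by
      refine (hasDerivAt_const t s).congr_of_eventuallyEq ?_
      filter_upwards [hI.mem_nhds ht] with a ha
      exact hinv s hs a ha
    have e5 := e3.unique e4
    have e6 : ((deriv (fun τ => X s τ) t, 1) : ℝ × ℝ)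
        = deriv (fun τ => X s τ) t • ((1, 0) : ℝ × ℝ) + (0, 1) := by
      ext <;> simp
    rw [e6, map_add, map_smul, smul_eq_mul] at e5
    rw [e1.deriv, e2.deriv]
    linarith
  have hD : deriv (fun σ => η * Real.exp (γ * t) / deriv (fun σ' => X σ' t) σ) s
      = η * Real.exp (γ * t) * (deriv (deriv fun y => P y t) (X s t)
        * deriv (fun σ' => X σ' t) s) := by
    have h1 : HasDerivAt (fun σ => deriv (fun y => P y t) (X σ t))
        (deriv (deriv fun y => P y t) (X s t) * deriv (fun σ' => X σ' t) s) s :=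
      HasDerivAt.comp (h₂ := deriv fun y => P y t) s hd2.hasDerivAt
        (hXds s hs t ht).hasDerivAt
    refine ((h1.const_mul (η * Real.exp (γ * t))).congr_of_eventuallyEq ?_).deriv
    filter_upwards [hJ.mem_nhds hs] with a ha
    have h := hS a ha
    have hne : deriv (fun σ' => X σ' t) a ≠ 0 := right_ne_zero_of_mul_eq_one h
    rw [div_eq_iff hne, mul_assoc, h, mul_one]
  have hE : deriv (fun τ => Real.exp (γ * τ) * X s τ) t
      = Real.exp (γ * t) * (γ * 1) * X s t + Real.exp (γ * t) * deriv (fun τ => X s τ) t :=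
    ((((hasDerivAt_id t).const_mul γ).exp).mul (hXdt s hs t ht).hasDerivAt).deriv
  rw [hE, hD]
  have h1 := hS s hs
  rw [hPeq _ hx t ht] at hT
  have hp := (hPx_pos _ hx t ht).ne'
  generalize deriv (deriv fun y => P y t) (X s t) = b at *
  generalize deriv (fun y => P y t) (X s t) = a at *
  generalize deriv (fun τ => X s τ) t = c at *
  generalize deriv (fun σ' => X σ' t) s = d at *
  apply mul_left_cancel₀ hp
  linear_combination Real.exp (γ * t) * hT + Real.exp (γ * t) * X s t * η * b * h1
end
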